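/- Let p ∈ (1,∞) and θ_p = 2 arcsin(2√(p−1)/p). Fix n,d ∈ ℕ with 0 ≤ d ≤ n. (i) For every function f : {-1,1}^n → ℂ of degree at most d and every t ≥ 0, ‖e^{-tΔ} f‖_{L_p} ≥ (((e^t+1)^{π/(2π−θ_p)} − (e^t−1)^{π/(2π−θ_p)}) / ((e^t+1)^{π/(2π−θ_p)} + (e^t−1)^{π/(2π−θ_p)}))^d · ‖f‖_{L_p}. (ii) For every function f : {-1,1}^n → ℂ in the d-th tail space and every t ≥ 0, ‖e^{-tΔ} f‖_{L_p} ≤ (((1+e^{-t})^{π/θ_p} − (1−e^{-t})^{π/θ_p}) / ((1+e^{-t})^{π/θ_p} + (1−e^{-t})^{π/θ_p}))^d · ‖f‖_{L_p}. -/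

import Mathlib

open scoped BigOperators ENNReal NNReal

noncomputable section

namespace HammingCube

variable {X : Type*} [NormedAddCommGroup X] [NormedSpace ℂ X]

/-- The sign ±1 associated to a boolean coordinate. -/
def sgn (b : Bool) : ℝ := if b then 1 else -1

/-- The Walsh function `w_A(ε) = ∏_{i ∈ A} ε_i`. -/
def walsh {n : ℕ} (A : Finset (Fin n)) (ε : Fin n → Bool) : ℝ := ∏ i ∈ A, sgn (ε i)

/-- The Fourier–Walsh coefficient `f̂(A) = 2⁻ⁿ ∑_δ f(δ) w_A(δ)`. -/
def coeff {n : ℕ} (f : (Fin n → Bool) → X) (A : Finset (Fin n)) : X :=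
  (2 ^ n : ℝ)⁻¹ • ∑ δ : Fin n → Bool, walsh A δ • f δ

/-- `f` has degree at most `d`: `f̂(A) = 0` whenever `|A| > d`. -/
def degLE {n : ℕ} (f : (Fin n → Bool) → X) (d : ℕ) : Prop :=
  ∀ A : Finset (Fin n), d < A.card → coeff f A = 0

/-- `f` belongs to the `d`-th tail space: `f̂(A) = 0` whenever `|A| < d`. -/
def tailSpace {n : ℕ} (f : (Fin n → Bool) → X) (d : ℕ) : Prop :=
  ∀ A : Finset (Fin n), A.card < d → coeff f A = 0

/-- The heat semigroup `e^{-tΔ} f = ∑_A e^{-t|A|} f̂(A) w_A`. -/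
def heat {n : ℕ} (t : ℝ) (f : (Fin n → Bool) → X) : (Fin n → Bool) → X :=
  fun ε => ∑ A : Finset (Fin n), Real.exp (-t * A.card) • walsh A ε • coeff f A

/-- The hypercube Laplacian `Δ f = ∑_A |A| f̂(A) w_A`. -/
def lap {n : ℕ} (f : (Fin n → Bool) → X) : (Fin n → Bool) → X :=
  fun ε => ∑ A : Finset (Fin n), (A.card : ℝ) • walsh A ε • coeff f A

/-- The fractional Laplacian `Δ^γ f = ∑_A |A|^γ f̂(A) w_A`. -/
def fracLap {n : ℕ} (γ : ℝ) (f : (Fin n → Bool) → X) : (Fin n → Bool) → X :=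
  fun ε => ∑ A : Finset (Fin n), ((A.card : ℝ) ^ γ) • walsh A ε • coeff f A

/-- The `i`-th discrete partial derivative. -/
def pderiv {n : ℕ} (i : Fin n) (f : (Fin n → Bool) → X) : (Fin n → Bool) → X :=
  fun ε => (2 : ℝ)⁻¹ • (f ε - f (Function.update ε i (!(ε i))))

/-- The vector-valued `L_p` norm `(2⁻ⁿ ∑_ε ‖f(ε)‖^p)^{1/p}` for finite `p`. -/
def lpNorm {n : ℕ} {Y : Type*} [NormedAddCommGroup Y] (p : ℝ)
    (f : (Fin n → Bool) → Y) : ℝ :=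
  ((2 ^ n : ℝ)⁻¹ * ∑ ε : Fin n → Bool, ‖f ε‖ ^ p) ^ (1 / p)

/-- The `L_∞` norm `max_ε ‖f(ε)‖`. -/
def linfNorm {n : ℕ} {Y : Type*} [NormedAddCommGroup Y]
    (f : (Fin n → Bool) → Y) : ℝ :=
  ⨆ ε : Fin n → Bool, ‖f ε‖

/-- The `L_p` norm for `p ∈ [1,∞]` encoded as `p : ℝ≥0∞`. -/
def lpNormE {n : ℕ} {Y : Type*} [NormedAddCommGroup Y] (p : ℝ≥0∞)
    (f : (Fin n → Bool) → Y) : ℝ :=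
  if p = ⊤ then linfNorm f else lpNorm p.toReal f

/-- The scalar `L_p` norm of the gradient `‖(∑_i |∂_i f|²)^{1/2}‖_{L_p}`. -/
def gradLpNorm {n : ℕ} (p : ℝ) (f : (Fin n → Bool) → ℂ) : ℝ :=
  lpNorm p (fun ε => Real.sqrt (∑ i : Fin n, ‖pderiv i f ε‖ ^ 2))

/-- The Rademacher projection `Rad f(ε) = ∑_i f̂({i}) ε_i`. -/
def Rad {n : ℕ} (f : (Fin n → Bool) → X) : (Fin n → Bool) → X :=
  fun ε => ∑ i : Fin n, sgn (ε i) • coeff f {i}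

/-- A complex Banach space is `K`-convex if the Rademacher projections are uniformly
bounded on `L_q` for some `q ∈ (1,∞)`. -/
def KConvex (X : Type*) [NormedAddCommGroup X] [NormedSpace ℂ X] : Prop :=
  ∃ q : ℝ, 1 < q ∧ ∃ M : ℝ, ∀ (n : ℕ) (f : (Fin n → Bool) → X),
    lpNorm q (Rad f) ≤ M * lpNorm q f

/-- `X` has cotype `q` with constant `C`. -/
def HasCotype (X : Type*) [NormedAddCommGroup X] [NormedSpace ℂ X] (q C : ℝ) : Prop :=
  ∀ (n : ℕ) (x : Fin n → X),
    C⁻¹ * (∑ i : Fin n, ‖x i‖ ^ q) ^ (1 / q) ≤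
      ((2 ^ n : ℝ)⁻¹ * ∑ ε : Fin n → Bool, ‖∑ i : Fin n, sgn (ε i) • x i‖ ^ q) ^ (1 / q)

/-- The entropy `Ent(h)` of a nonnegative function on the cube. -/
def entropy {n : ℕ} (h : (Fin n → Bool) → ℝ) : ℝ :=
  (2 ^ n : ℝ)⁻¹ * ∑ ε : Fin n → Bool, h ε * Real.log (h ε) -
    ((2 ^ n : ℝ)⁻¹ * ∑ ε : Fin n → Bool, h ε) *
      Real.log ((2 ^ n : ℝ)⁻¹ * ∑ ε : Fin n → Bool, h ε)

/-- The `L_∞` norm of the gradient `max_ε (∑_i |∂_i f(ε)|²)^{1/2}`. -/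
def gradLinfNorm {n : ℕ} (f : (Fin n → Bool) → ℂ) : ℝ :=
  ⨆ ε : Fin n → Bool, Real.sqrt (∑ i : Fin n, ‖pderiv i f ε‖ ^ 2)




theorem key_le {p q : ℝ} (hp : 1 < p) (h0 : 0 ≤ q) (h1 : q ≤ 1) :
    p * |q - q ^ (p - 1)| ≤ |p - 2| * (1 - q ^ p) := by
  rcases le_total 2 p with h2 | h2
  · have hq : q ^ (p - 1) ≤ q := by
      rcases h0.eq_or_lt with rfl | hpos
      · rw [Real.zero_rpow (by linarith)]
      · calc q ^ (p - 1) ≤ q ^ (1 : ℝ) := Real.rpow_le_rpow_of_exponent_ge hpos h1 (by linarith)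
          _ = q := Real.rpow_one q
    rw [abs_of_nonneg (by linarith), abs_of_nonneg (by linarith)]
    have anti : AntitoneOn (fun x : ℝ => (p - 2) * (1 - x ^ p) - p * (x - x ^ (p - 1)))
        (Set.Icc 0 1) := by
      apply antitoneOn_of_deriv_nonpos (convex_Icc 0 1)
      · apply Continuous.continuousOn
        have a1 : Continuous fun x : ℝ => x ^ p := Real.continuous_rpow_const (by linarith)
        have a2 : Continuous fun x : ℝ => x ^ (p - 1) := Real.continuous_rpow_const (by linarith)
        fun_prop
      · intro x hx
        rw [interior_Icc] at hx
        have a1 := Real.hasDerivAt_rpow_const (x := x) (p := p) (Or.inl hx.1.ne')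
        have a2 := Real.hasDerivAt_rpow_const (x := x) (p := p - 1) (Or.inl hx.1.ne')
        exact (((a1.const_sub 1).const_mul (p - 2)).sub
          (((hasDerivAt_id x).sub a2).const_mul p)).differentiableAt.differentiableWithinAt
      · intro x hx
        rw [interior_Icc] at hx
        have a1 := Real.hasDerivAt_rpow_const (x := x) (p := p) (Or.inl hx.1.ne')
        have a2 := Real.hasDerivAt_rpow_const (x := x) (p := p - 1) (Or.inl hx.1.ne')
        have a3 := (((a1.const_sub 1).const_mul (p - 2)).sub
          (((hasDerivAt_id x).sub a2).const_mul p)).deriv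
        have a4 : deriv (fun x : ℝ => (p - 2) * (1 - x ^ p) - p * (x - x ^ (p - 1))) x = _ := a3
        rw [a4]
        have am := Real.geom_mean_le_arith_mean2_weighted (w₁ := 1 / (p - 1))
          (w₂ := (p - 2) / (p - 1)) (p₁ := 1) (p₂ := x ^ (p - 1))
          (by apply div_nonneg <;> linarith) (by apply div_nonneg <;> linarith) zero_le_one
          (Real.rpow_nonneg hx.1.le _) (by field_simp [show p - 1 ≠ 0 by linarith]; ring)
        rw [Real.one_rpow, one_mul, ← Real.rpow_mul hx.1.le,
          show (p - 1) * ((p - 2) / (p - 1)) = p - 2 by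
            field_simp [show p - 1 ≠ 0 by linarith]] at am
        have am2 : (p - 1) * x ^ (p - 2) ≤ 1 + (p - 2) * x ^ (p - 1) := by
          have := mul_le_mul_of_nonneg_left am (show 0 ≤ p - 1 by linarith)
          have e : (p - 1) * (1 / (p - 1) * 1 + (p - 2) / (p - 1) * x ^ (p - 1))
            = 1 + (p - 2) * x ^ (p - 1) := by field_simp [show p - 1 ≠ 0 by linarith]
          linarith
        rw [show p - 1 - 1 = p - 2 by ring]
        nlinarith
    have := anti ⟨h0, h1⟩ ⟨zero_le_one, le_refl 1⟩ h1
    simp only [Real.one_rpow] at this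
    linarith
  · have hq : 0 < q → q ≤ q ^ (p - 1) := by
      intro hpos
      calc q = q ^ (1 : ℝ) := (Real.rpow_one q).symm
        _ ≤ q ^ (p - 1) := Real.rpow_le_rpow_of_exponent_ge hpos h1 (by linarith)
    rcases h0.eq_or_lt with rfl | hpos
    · rw [Real.zero_rpow (by linarith), Real.zero_rpow (by linarith)]
      simp
    rw [abs_of_nonpos (by linarith [hq hpos]), abs_of_nonpos (by linarith)]
    have anti : AntitoneOn (fun x : ℝ => (2 - p) * (1 - x ^ p) - p * (x ^ (p - 1) - x))
        (Set.Icc 0 1) := by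
      apply antitoneOn_of_deriv_nonpos (convex_Icc 0 1)
      · apply Continuous.continuousOn
        have a1 : Continuous fun x : ℝ => x ^ p := Real.continuous_rpow_const (by linarith)
        have a2 : Continuous fun x : ℝ => x ^ (p - 1) := Real.continuous_rpow_const (by linarith)
        fun_prop
      · intro x hx
        rw [interior_Icc] at hx
        have a1 := Real.hasDerivAt_rpow_const (x := x) (p := p) (Or.inl hx.1.ne')
        have a2 := Real.hasDerivAt_rpow_const (x := x) (p := p - 1) (Or.inl hx.1.ne')
        exact (((a1.const_sub 1).const_mul (2 - p)).sub
          ((a2.sub (hasDerivAt_id x)).const_mul p)).differentiableAt.differentiableWithinAt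
      · intro x hx
        rw [interior_Icc] at hx
        have a1 := Real.hasDerivAt_rpow_const (x := x) (p := p) (Or.inl hx.1.ne')
        have a2 := Real.hasDerivAt_rpow_const (x := x) (p := p - 1) (Or.inl hx.1.ne')
        have a3 := (((a1.const_sub 1).const_mul (2 - p)).sub
          ((a2.sub (hasDerivAt_id x)).const_mul p)).deriv
        have a4 : deriv (fun x : ℝ => (2 - p) * (1 - x ^ p) - p * (x ^ (p - 1) - x)) x = _ := a3
        rw [a4]
        have am := Real.geom_mean_le_arith_mean2_weighted (w₁ := 2 - p)
          (w₂ := p - 1) (p₁ := x ^ (p - 1)) (p₂ := x ^ (p - 2))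
          (by linarith) (by linarith) (Real.rpow_nonneg hx.1.le _)
          (Real.rpow_nonneg hx.1.le _) (by ring)
        rw [← Real.rpow_mul hx.1.le, ← Real.rpow_mul hx.1.le, ← Real.rpow_add hx.1,
          show (p - 1) * (2 - p) + (p - 2) * (p - 1) = 0 by ring, Real.rpow_zero] at am
        rw [show p - 1 - 1 = p - 2 by ring]
        nlinarith
    have := anti ⟨h0, h1⟩ ⟨zero_le_one, le_refl 1⟩ h1
    simp only [Real.one_rpow] at this
    linarith

/-- Logarithm of the normalized ratio. -/
def Lam (p e q : ℝ) : ℝ := Real.log (1 + q ^ 2 + 2 * e * q) - 2 / p * Real.log (1 + q ^ p)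

theorem num_pos {e q : ℝ} (he : |e| < 1) (h0 : 0 ≤ q) : 0 < 1 + q ^ 2 + 2 * e * q := by
  have := (abs_lt.1 he).1
  rcases h0.eq_or_lt with rfl | h
  · norm_num
  · nlinarith [sq_nonneg (1 - q), mul_pos (show 0 < 1 + e by linarith) h]

theorem Lam_deriv {p e q : ℝ} (hp : 1 < p) (he : |e| < 1) (h0 : 0 < q) :
    HasDerivAt (Lam p e) (2 * ((q - q ^ (p - 1)) + e * (1 - q ^ p)) /
      ((1 + q ^ 2 + 2 * e * q) * (1 + q ^ p))) q := by
  have a1 := Real.hasDerivAt_rpow_const (x := q) (p := p) (Or.inl h0.ne')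
  have np := num_pos he h0.le
  have dp : 0 < 1 + q ^ p := by positivity
  have b1 : HasDerivAt (fun q : ℝ => 1 + q ^ 2 + 2 * e * q) (2 * q + 2 * e) q := by
    have := (((hasDerivAt_id q).pow 2).const_add 1).add ((hasDerivAt_id q).const_mul (2 * e))
    refine this.congr_deriv ?_
    simp
  have b2 := (b1.log np.ne').sub (((a1.const_add 1).log dp.ne').const_mul (2 / p))
  refine b2.congr_deriv ?_
  have hq : q ^ p = q * q ^ (p - 1) := by
    rw [← Real.rpow_one_add' h0.le (by linarith)]; ring_nf
  have hp0 : p ≠ 0 := by linarith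
  have np' := np.ne'
  have dp' := dp.ne'
  have e1 : 2 / p * (p * q ^ (p - 1) / (1 + q ^ p)) = 2 * q ^ (p - 1) / (1 + q ^ p) := by
    field_simp
  rw [e1, div_sub_div _ _ np' dp']
  congr 1
  rw [hq]
  ring

theorem Lam_cont {p e : ℝ} (hp : 1 < p) (he : |e| < 1) :
    ContinuousOn (Lam p e) (Set.Icc 0 1) := by
  have a1 : Continuous fun x : ℝ => x ^ p := Real.continuous_rpow_const (by linarith)
  unfold Lam
  apply ContinuousOn.sub
  · apply ContinuousOn.log (by fun_prop)
    intro x hx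
    exact (num_pos he hx.1).ne'
  · apply ContinuousOn.mul continuousOn_const
    apply ContinuousOn.log (by fun_prop)
    intro x hx
    have := Real.rpow_nonneg hx.1 p
    positivity

theorem Lam_mono {p : ℝ} (hp : 1 < p) : MonotoneOn (Lam p (|p - 2| / p)) (Set.Icc 0 1) := by
  have hc : |(|p - 2| / p)| < 1 := by
    rw [abs_div, abs_abs, abs_of_pos (by linarith : 0 < p), div_lt_one (by linarith), abs_lt]
    constructor <;> linarith
  apply monotoneOn_of_deriv_nonneg (convex_Icc 0 1) (Lam_cont hp hc)
  · intro x hx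
    rw [interior_Icc] at hx
    exact (Lam_deriv hp hc hx.1).differentiableAt.differentiableWithinAt
  · intro x hx
    rw [interior_Icc] at hx
    rw [(Lam_deriv hp hc hx.1).deriv]
    have k := key_le hp hx.1.le hx.2.le
    have := neg_abs_le (x - x ^ (p - 1))
    apply div_nonneg
    · have e : |x - x ^ (p - 1)| ≤ |p - 2| / p * (1 - x ^ p) := by
        rw [div_mul_eq_mul_div, le_div_iff₀ (by linarith)]; linarith
      linarith
    · have := num_pos hc hx.1.le
      have := Real.rpow_nonneg hx.1.le p
      positivity

theorem Lam_anti {p : ℝ} (hp : 1 < p) : AntitoneOn (Lam p (-(|p - 2| / p))) (Set.Icc 0 1) := by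
  have hc : |-(|p - 2| / p)| < 1 := by
    rw [abs_neg, abs_div, abs_abs, abs_of_pos (by linarith : 0 < p), div_lt_one (by linarith), abs_lt]
    constructor <;> linarith
  apply antitoneOn_of_deriv_nonpos (convex_Icc 0 1) (Lam_cont hp hc)
  · intro x hx
    rw [interior_Icc] at hx
    exact (Lam_deriv hp hc hx.1).differentiableAt.differentiableWithinAt
  · intro x hx
    rw [interior_Icc] at hx
    rw [(Lam_deriv hp hc hx.1).deriv]
    have k := key_le hp hx.1.le hx.2.le
    have := le_abs_self (x - x ^ (p - 1))
    apply div_nonpos_of_nonpos_of_nonneg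
    · have e : |x - x ^ (p - 1)| ≤ |p - 2| / p * (1 - x ^ p) := by
        rw [div_mul_eq_mul_div, le_div_iff₀ (by linarith)]; linarith
      linarith
    · have := num_pos hc hx.1.le
      have := Real.rpow_nonneg hx.1.le p
      positivity

theorem Lam_eq {p e A B : ℝ} (hp : 1 < p) (he : |e| < 1) (hA : 0 < A) (hB : 0 ≤ B) :
    Lam p e (B / A) = Real.log (A ^ 2 + B ^ 2 + 2 * e * (A * B)) - 2 / p * Real.log (A ^ p + B ^ p) := by
  have hq : 0 ≤ B / A := by positivity
  have e1 : A ^ 2 + B ^ 2 + 2 * e * (A * B) = A ^ 2 * (1 + (B / A) ^ 2 + 2 * e * (B / A)) := by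
    field_simp
  have e2 : A ^ p + B ^ p = A ^ p * (1 + (B / A) ^ p) := by
    rw [Real.div_rpow hB hA.le]
    have : A ^ p ≠ 0 := (Real.rpow_pos_of_pos hA p).ne'
    field_simp
  have := Real.rpow_nonneg hq p
  rw [e1, e2, Real.log_mul (by positivity) (num_pos he hq).ne',
    Real.log_mul (Real.rpow_pos_of_pos hA p).ne' (by positivity), Real.log_rpow hA, Lam]
  have hp0 : p ≠ 0 := by linarith
  simp only [Real.log_pow]
  field_simp
  push_cast
  ring

theorem two_num_aux {p A B A' B' : ℝ} (hp : 1 < p) (hA : 0 < A) (hA' : 0 < A') (hB : 0 ≤ B) (hB' : 0 ≤ B')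
    (hBA : B ≤ A) (hBA' : B' ≤ A')
    (h : |p - 2| / p * |A * B - A' * B'| * 2 ≤ (A ^ 2 + B ^ 2) - (A' ^ 2 + B' ^ 2)) :
    A' ^ p + B' ^ p ≤ A ^ p + B ^ p := by
  have hc : |(|p - 2| / p)| < 1 := by
    rw [abs_div, abs_abs, abs_of_pos (by linarith : 0 < p), div_lt_one (by linarith), abs_lt]
    constructor <;> linarith
  have hc' : |-(|p - 2| / p)| < 1 := by rwa [abs_neg]
  have hc0 : 0 ≤ |p - 2| / p := by positivity
  have q0 : B / A ∈ Set.Icc (0 : ℝ) 1 := ⟨by positivity, by rwa [div_le_one hA]⟩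
  have q0' : B' / A' ∈ Set.Icc (0 : ℝ) 1 := ⟨by positivity, by rwa [div_le_one hA']⟩
  have d1 : 0 < A ^ p + B ^ p := by
    have := Real.rpow_pos_of_pos hA p
    have := Real.rpow_nonneg hB p
    positivity
  have d2 : 0 < A' ^ p + B' ^ p := by
    have := Real.rpow_pos_of_pos hA' p
    have := Real.rpow_nonneg hB' p
    positivity
  have fin : ∀ e : ℝ, |e| < 1 → Lam p e (B / A) ≤ Lam p e (B' / A') →
      A' ^ 2 + B' ^ 2 + 2 * e * (A' * B') ≤ A ^ 2 + B ^ 2 + 2 * e * (A * B) →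
      A' ^ p + B' ^ p ≤ A ^ p + B ^ p := by
    intro e he hl hn
    rw [Lam_eq hp he hA hB, Lam_eq hp he hA' hB'] at hl
    have n2 : 0 < A' ^ 2 + B' ^ 2 + 2 * e * (A' * B') := by
      have : A' ^ 2 + B' ^ 2 + 2 * e * (A' * B') =
        A' ^ 2 * (1 + (B' / A') ^ 2 + 2 * e * (B' / A')) := by field_simp
      rw [this]
      have := num_pos he q0'.1
      positivity
    have := Real.log_le_log n2 hn
    rw [← Real.log_le_log_iff d2 d1]
    have h3 : 2 / p * Real.log (A' ^ p + B' ^ p) ≤ 2 / p * Real.log (A ^ p + B ^ p) := by linarith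
    exact le_of_mul_le_mul_left h3 (by positivity)
  rcases le_total (B / A) (B' / A') with hq | hq
  · refine fin _ hc (Lam_mono hp q0 q0' hq) ?_
    have := neg_abs_le (A * B - A' * B')
    nlinarith
  · refine fin _ hc' (Lam_anti hp q0' q0 hq) ?_
    have := le_abs_self (A * B - A' * B')
    nlinarith

theorem two_num {p A B A' B' : ℝ} (hp : 1 < p) (hA : 0 ≤ A) (hA' : 0 ≤ A') (hB : 0 ≤ B) (hB' : 0 ≤ B')
    (h : |p - 2| / p * |A * B - A' * B'| * 2 ≤ (A ^ 2 + B ^ 2) - (A' ^ 2 + B' ^ 2)) :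
    A' ^ p + B' ^ p ≤ A ^ p + B ^ p := by
  wlog hBA : B ≤ A generalizing A B
  · rw [add_comm (A ^ p)]
    exact this hB hA (by rw [mul_comm B A]; linarith) (le_of_not_ge hBA)
  wlog hBA' : B' ≤ A' generalizing A' B'
  · rw [add_comm (A' ^ p)]
    exact this hB' hA' (by rw [mul_comm B' A']; linarith) (le_of_not_ge hBA')
  have hh : 0 ≤ |p - 2| / p * |A * B - A' * B'| * 2 := by positivity
  rcases hA'.eq_or_lt with rfl | hA'
  · have : B' = 0 := by linarith
    subst this
    rw [Real.zero_rpow (by linarith)]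
    have := Real.rpow_nonneg hA p
    have := Real.rpow_nonneg hB p
    linarith
  rcases hA.eq_or_lt with rfl | hA
  · have : B = 0 := by linarith
    subst this
    nlinarith
  exact two_num_aux hp hA hA' hB hB' hBA hBA' h

theorem two_point {p : ℝ} (hp : 1 < p) {z : ℂ} (hz : |p - 2| / p * ‖1 - z ^ 2‖ ≤ 1 - ‖z‖ ^ 2)
    (a b : ℂ) : ‖a + z * b‖ ^ p + ‖a - z * b‖ ^ p ≤ ‖a + b‖ ^ p + ‖a - b‖ ^ p := by
  apply two_num hp (norm_nonneg _) (norm_nonneg _) (norm_nonneg _) (norm_nonneg _)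
  have par : ∀ b : ℂ, ‖a + b‖ ^ 2 + ‖a - b‖ ^ 2 = 2 * (‖a‖ ^ 2 + ‖b‖ ^ 2) := by
    intro b
    have := parallelogram_law_with_norm ℝ a b
    nlinarith
  rw [par, par, ← norm_mul, ← norm_mul]
  have h1 : |‖(a + b) * (a - b)‖ - ‖(a + z * b) * (a - z * b)‖| ≤ ‖1 - z ^ 2‖ * ‖b‖ ^ 2 := by
    refine (abs_norm_sub_norm_le _ _).trans ?_
    rw [← norm_pow, ← norm_mul, ← norm_neg]
    apply le_of_eq
    congr 1
    ring
  have hc0 : 0 ≤ |p - 2| / p := by positivity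
  have h2 := mul_le_mul_of_nonneg_left h1 hc0
  have h3 := mul_le_mul_of_nonneg_right hz (sq_nonneg ‖b‖)
  rw [norm_mul z b, mul_pow]
  nlinarith

/-- Flip the `i`-th coordinate. -/
def flip {n : ℕ} (i : Fin n) (ε : Fin n → Bool) : Fin n → Bool := Function.update ε i (!(ε i))

theorem flip_flip {n : ℕ} (i : Fin n) (ε : Fin n → Bool) : flip i (flip i ε) = ε := by
  unfold flip
  simp

theorem sum_flip {n : ℕ} (i : Fin n) (g : (Fin n → Bool) → ℝ) : ∑ ε, g (flip i ε) = ∑ ε, g ε :=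
  Equiv.sum_comp (Function.Involutive.toPerm (flip i) (flip_flip i)) g

theorem walsh_flip {n : ℕ} (i : Fin n) (A : Finset (Fin n)) (ε : Fin n → Bool) :
    walsh A (flip i ε) = (if i ∈ A then -1 else 1) * walsh A ε := by
  have hne : ∀ j, j ≠ i → sgn (flip i ε j) = sgn (ε j) := by
    intro j hj
    simp [flip, Function.update_of_ne hj]
  unfold walsh
  split_ifs with h
  · rw [← Finset.mul_prod_erase A _ h, ← Finset.mul_prod_erase A (fun i => sgn (ε i)) h]
    rw [Finset.prod_congr rfl (fun j hj => hne j (Finset.ne_of_mem_erase hj))]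
    have : sgn (flip i ε i) = - sgn (ε i) := by
      simp only [flip, Function.update_self]
      cases ε i <;> simp [sgn]
    rw [this]; ring
  · rw [one_mul]
    exact Finset.prod_congr rfl (fun j hj => hne j (fun e => h (e ▸ hj)))

theorem walsh_orth {n : ℕ} (ε δ : Fin n → Bool) :
    ∑ A : Finset (Fin n), walsh A ε * walsh A δ = if ε = δ then 2 ^ n else 0 := by
  have h := Finset.prod_one_add (f := fun i => sgn (ε i) * sgn (δ i)) (Finset.univ : Finset (Fin n))
  rw [Finset.powerset_univ] at h
  simp only [walsh, ← Finset.prod_mul_distrib]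
  rw [← h]
  split_ifs with hh
  · subst hh
    have : ∀ i, 1 + sgn (ε i) * sgn (ε i) = 2 := by
      intro i; cases ε i <;> norm_num [sgn]
    simp [this]
  · obtain ⟨i, hi⟩ := Function.ne_iff.1 hh
    apply Finset.prod_eq_zero (Finset.mem_univ i)
    revert hi
    cases ε i <;> cases δ i <;> norm_num [sgn]

theorem inversion {n : ℕ} (f : (Fin n → Bool) → ℂ) (ε : Fin n → Bool) :
    ∑ A : Finset (Fin n), (walsh A ε : ℂ) * coeff f A = f ε := by
  have h : ∀ A : Finset (Fin n), (walsh A ε : ℂ) * coeff f A =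
      ∑ δ, ((2 ^ n : ℝ)⁻¹ : ℂ) * (((walsh A ε * walsh A δ : ℝ) : ℂ) * f δ) := by
    intro A
    simp only [coeff, Complex.real_smul]
    rw [Finset.mul_sum, Finset.mul_sum]
    apply Finset.sum_congr rfl
    intro δ _
    push_cast
    ring
  simp only [h]
  rw [Finset.sum_comm]
  simp only [← Finset.mul_sum, ← Finset.sum_mul, ← Complex.ofReal_sum, walsh_orth]
  rw [Finset.sum_eq_single ε]
  · simp
  · intro δ _ hδ
    simp [Ne.symm hδ]
  · simp

/-- The partial noise operator acting on the coordinates in `I`. -/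
def TI {n : ℕ} (z : ℂ) (f : Finset (Fin n) → ℂ) (I : Finset (Fin n)) (ε : Fin n → Bool) : ℂ :=
  ∑ A : Finset (Fin n), z ^ (A ∩ I).card * ((walsh A ε : ℂ) * f A)

/-- The noise operator. -/
def Tz {n : ℕ} (z : ℂ) (f : Finset (Fin n) → ℂ) (ε : Fin n → Bool) : ℂ :=
  ∑ A : Finset (Fin n), z ^ A.card * ((walsh A ε : ℂ) * f A)

theorem TI_insert {n : ℕ} (z : ℂ) (f : Finset (Fin n) → ℂ) (I : Finset (Fin n)) (i : Fin n)
    (hi : i ∉ I) (ε : Fin n → Bool) :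
    TI z f (insert i I) ε = (TI z f I ε + TI z f I (flip i ε)) / 2 +
      z * ((TI z f I ε - TI z f I (flip i ε)) / 2) := by
  have e : ∀ x y : ℂ, (x + y) / 2 + z * ((x - y) / 2) = (1 + z) / 2 * x + (1 - z) / 2 * y := by
    intro x y; ring
  rw [e]
  unfold TI
  rw [Finset.mul_sum, Finset.mul_sum, ← Finset.sum_add_distrib]
  apply Finset.sum_congr rfl
  intro A _
  rw [walsh_flip]
  split_ifs with h
  · rw [Finset.inter_insert_of_mem h, Finset.card_insert_of_notMem (by simp [hi])]
    push_cast
    ring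
  · rw [Finset.inter_insert_of_notMem h]
    push_cast
    ring

theorem TI_insert_flip {n : ℕ} (z : ℂ) (f : Finset (Fin n) → ℂ) (I : Finset (Fin n)) (i : Fin n)
    (hi : i ∉ I) (ε : Fin n → Bool) :
    TI z f (insert i I) (flip i ε) = (TI z f I ε + TI z f I (flip i ε)) / 2 -
      z * ((TI z f I ε - TI z f I (flip i ε)) / 2) := by
  rw [TI_insert z f I i hi, flip_flip]
  ring

theorem Tz_contr {p : ℝ} (hp : 1 < p) {z : ℂ} (hz : |p - 2| / p * ‖1 - z ^ 2‖ ≤ 1 - ‖z‖ ^ 2)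
    {n : ℕ} (f : Finset (Fin n) → ℂ) :
    ∑ ε : Fin n → Bool, ‖Tz z f ε‖ ^ p ≤
      ∑ ε : Fin n → Bool, ‖∑ A : Finset (Fin n), (walsh A ε : ℂ) * f A‖ ^ p := by
  have key : ∀ I : Finset (Fin n), ∑ ε : Fin n → Bool, ‖TI z f I ε‖ ^ p ≤ ∑ ε : Fin n → Bool, ‖∑ A : Finset (Fin n), (walsh A ε : ℂ) * f A‖ ^ p := by
    intro I
    induction I using Finset.induction_on with
    | empty =>
      apply le_of_eq
      apply Finset.sum_congr rfl
      intro ε _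
      simp [TI]
    | insert i I hi ih =>
      refine le_trans ?_ ih
      have s1 := sum_flip i (fun ε => ‖TI z f (insert i I) ε‖ ^ p)
      have s2 := sum_flip i (fun ε => ‖TI z f I ε‖ ^ p)
      have s3 : ∑ ε, (‖TI z f (insert i I) ε‖ ^ p + ‖TI z f (insert i I) (flip i ε)‖ ^ p) ≤
          ∑ ε, (‖TI z f I ε‖ ^ p + ‖TI z f I (flip i ε)‖ ^ p) := by
        apply Finset.sum_le_sum
        intro ε _
        rw [TI_insert z f I i hi, TI_insert_flip z f I i hi]
        refine (two_point hp hz _ _).trans (le_of_eq ?_)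
        congr 3 <;> ring
      rw [Finset.sum_add_distrib, Finset.sum_add_distrib] at s3
      linarith
  have := key Finset.univ
  simpa [TI, Tz] using this

/-- The Cayley transform. -/
def cay (w : ℂ) : ℂ := (w - 1) / (w + 1)

theorem cay_norm_sq {w : ℂ} (h : w + 1 ≠ 0) : (1 - ‖cay w‖ ^ 2) * ‖w + 1‖ ^ 2 = 4 * w.re := by
  have h' : ‖w + 1‖ ≠ 0 := norm_ne_zero_iff.2 h
  have e : (1 - ‖cay w‖ ^ 2) * ‖w + 1‖ ^ 2 = ‖w + 1‖ ^ 2 - ‖w - 1‖ ^ 2 := by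
    rw [cay, norm_div]
    field_simp
  rw [e, ← Complex.normSq_eq_norm_sq, ← Complex.normSq_eq_norm_sq, Complex.normSq_apply,
    Complex.normSq_apply]
  simp
  ring

theorem cay_one_sub_sq {w : ℂ} (h : w + 1 ≠ 0) : ‖1 - cay w ^ 2‖ * ‖w + 1‖ ^ 2 = 4 * ‖w‖ := by
  rw [← norm_pow, ← norm_mul]
  have e : (1 - cay w ^ 2) * (w + 1) ^ 2 = 4 * w := by
    rw [cay]
    field_simp
    ring
  rw [e, norm_mul]
  simp

theorem cay_tendsto : Filter.Tendsto cay (Bornology.cobounded ℂ) (nhds 1) := by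
  have h1 : Filter.Tendsto (fun w : ℂ => w + 1) (Bornology.cobounded ℂ) (Bornology.cobounded ℂ) := by
    rw [← tendsto_norm_atTop_iff_cobounded]
    refine Filter.tendsto_atTop_mono (f := fun w : ℂ => ‖w‖ - 1) ?_ ?_
    · intro w
      have := norm_sub_le (w + 1) 1
      simp at this
      linarith
    · exact Filter.tendsto_atTop_add_const_right _ _ tendsto_norm_cobounded_atTop
  have h2 : Filter.Tendsto (fun w : ℂ => 1 - 2 * (w + 1)⁻¹) (Bornology.cobounded ℂ)
      (nhds (1 - 2 * 0)) :=
    tendsto_const_nhds.sub (tendsto_const_nhds.mul (Filter.tendsto_inv₀_cobounded.comp h1))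
  rw [mul_zero, sub_zero] at h2
  refine h2.congr' ?_
  filter_upwards [h1.eventually (Bornology.eventually_ne_cobounded 0)] with w hw
  rw [cay]
  field_simp
  ring

theorem log_bd {κ : ℝ} (h0 : 0 < κ) (h2 : κ < 2) {ω : ℂ} (hω : 0 ≤ ω.re) :
    -Real.pi < (Complex.log ω * κ).im ∧ (Complex.log ω * κ).im < Real.pi := by
  have h := Complex.abs_arg_le_pi_div_two_iff.2 hω
  have e : (Complex.log ω * κ).im = ω.arg * κ := by simp [Complex.log_im]
  rw [e]
  have : |ω.arg * κ| < Real.pi := by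
    rw [abs_mul, abs_of_pos h0]
    nlinarith [Real.pi_pos]
  exact abs_lt.1 this

theorem cpow_ne_one {κ : ℝ} (h0 : 0 < κ) (h2 : κ < 2) {ω : ℂ} (hω : 0 ≤ ω.re) (h1 : ω ≠ 1) :
    ω ^ (κ : ℂ) ≠ 1 := by
  have hk : (κ : ℂ) ≠ 0 := by exact_mod_cast h0.ne'
  rcases eq_or_ne ω 0 with rfl | hne
  · rw [Complex.zero_cpow hk]; exact zero_ne_one
  rw [Complex.cpow_def_of_ne_zero hne]
  intro h
  have hb := log_bd h0 h2 hω
  have h3 := Complex.log_exp hb.1 hb.2.le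
  rw [h, Complex.log_one] at h3
  have h4 : Complex.log ω = 0 := by
    rcases mul_eq_zero.1 h3.symm with h | h
    · exact h
    · exact absurd h hk
  apply h1
  rw [← Complex.exp_log hne, h4, Complex.exp_zero]

theorem cpow_add_one_ne {κ : ℝ} (h0 : 0 < κ) (h2 : κ < 2) {ω : ℂ} (hω : 0 ≤ ω.re) :
    ω ^ (κ : ℂ) + 1 ≠ 0 := by
  have hk : (κ : ℂ) ≠ 0 := by exact_mod_cast h0.ne'
  rcases eq_or_ne ω 0 with rfl | hne
  · rw [Complex.zero_cpow hk]; simp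
  rw [Complex.cpow_def_of_ne_zero hne]
  intro h
  have hb := log_bd h0 h2 hω
  have h3 := Complex.log_exp hb.1 hb.2.le
  rw [eq_neg_of_add_eq_zero_left h, Complex.log_neg_one] at h3
  rw [← h3] at hb
  simp at hb

/-- The power map. -/
def upow (κ : ℝ) (ω : ℂ) : ℂ := ω ^ (κ : ℂ)

/-- The quotient of the two conformal maps, with the singularity removed. -/
def quo (κ : ℝ) (ω : ℂ) : ℂ := dslope (upow κ) 1 ω * ((ω + 1) / (upow κ ω + 1))

theorem add_one_ne {ω : ℂ} (hω : 0 ≤ ω.re) : ω + 1 ≠ 0 := by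
  intro h
  have := congrArg Complex.re h
  simp at this
  linarith

theorem quo_of_ne {κ : ℝ} {ω : ℂ} (hω : 0 ≤ ω.re) (h1 : ω ≠ 1) :
    quo κ ω = cay (upow κ ω) / cay ω := by
  rw [quo, dslope_of_ne _ h1, slope_def_field, cay, cay]
  have : upow κ 1 = 1 := by simp [upow]
  rw [this]
  have a := add_one_ne hω
  have b : ω - 1 ≠ 0 := sub_ne_zero.2 h1
  field_simp

theorem upow_contOn {κ : ℝ} (h0 : 0 < κ) : ContinuousOn (upow κ) {z | 0 ≤ z.re} := by
  intro z hz
  exact (Complex.continuousAt_cpow_const_of_re_pos (Or.inl hz) (by simpa using h0)).continuousWithinAt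

theorem upow_diffOn (κ : ℝ) : DifferentiableOn ℂ (upow κ) {z | 0 < z.re} := by
  intro z hz
  have hz' : 0 < z.re := hz
  exact (differentiableAt_id.cpow_const (Or.inl hz')).differentiableWithinAt

theorem nhds_one : {z : ℂ | 0 < z.re} ∈ nhds (1 : ℂ) :=
  (isOpen_lt continuous_const Complex.continuous_re).mem_nhds (by simp)

theorem nhds_one' : {z : ℂ | 0 ≤ z.re} ∈ nhds (1 : ℂ) :=
  Filter.mem_of_superset nhds_one (fun z (hz : 0 < z.re) => hz.le)

theorem dcl {E : Type*} [NormedAddCommGroup E] [NormedSpace ℂ E] {g : ℂ → E}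
    (h1 : DifferentiableOn ℂ g {z | 0 < z.re})
    (h2 : ContinuousOn g {z | 0 ≤ z.re}) : DiffContOnCl ℂ g {z | 0 < z.re} := by
  refine ⟨h1, ?_⟩
  have : closure {z : ℂ | 0 < z.re} = {z | 0 ≤ z.re} := Complex.closure_setOfPred_lt_re 0
  rw [this]
  exact h2

theorem quo_diffOn {κ : ℝ} (h0 : 0 < κ) (h2 : κ < 2) : DifferentiableOn ℂ (quo κ) {z | 0 < z.re} := by
  have a := (Complex.differentiableOn_dslope nhds_one).2 (upow_diffOn κ)
  refine a.mul (DifferentiableOn.div (by fun_prop) ((upow_diffOn κ).add_const _) ?_)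
  intro z hz
  have hz' : 0 < z.re := hz
  exact cpow_add_one_ne h0 h2 hz'.le

theorem upow_diff_one (κ : ℝ) : DifferentiableAt ℂ (upow κ) 1 :=
  (upow_diffOn κ).differentiableAt nhds_one

theorem quo_contOn {κ : ℝ} (h0 : 0 < κ) (h2 : κ < 2) : ContinuousOn (quo κ) {z | 0 ≤ z.re} := by
  have a := (continuousOn_dslope nhds_one').2 ⟨upow_contOn h0, upow_diff_one κ⟩
  refine a.mul (ContinuousOn.div (by fun_prop) ((upow_contOn h0).add continuousOn_const) ?_)
  intro z hz
  exact cpow_add_one_ne h0 h2 hz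

theorem quo_ne {κ : ℝ} (h0 : 0 < κ) (h2 : κ < 2) {ω : ℂ} (hω : 0 ≤ ω.re) : quo κ ω ≠ 0 := by
  have a := add_one_ne hω
  have b := cpow_add_one_ne h0 h2 hω
  apply mul_ne_zero _ (div_ne_zero a b)
  rcases eq_or_ne ω 1 with rfl | h1
  · rw [dslope_same]
    have : HasDerivAt (upow κ) (κ * 1 ^ ((κ : ℂ) - 1) * 1) 1 :=
      (hasDerivAt_id (1 : ℂ)).cpow_const (Or.inl (by simp))
    rw [this.deriv]
    simp [h0.ne']
  · rw [dslope_of_ne _ h1, slope_def_field]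
    apply div_ne_zero _ (sub_ne_zero.2 h1)
    have : upow κ 1 = 1 := by simp [upow]
    rw [this]
    exact sub_ne_zero.2 (cpow_ne_one h0 h2 hω h1)

theorem upow_tendsto {κ : ℝ} (h0 : 0 < κ) :
    Filter.Tendsto (upow κ) (Bornology.cobounded ℂ) (Bornology.cobounded ℂ) := by
  rw [← tendsto_norm_atTop_iff_cobounded]
  have : (fun z => ‖upow κ z‖) = fun z => ‖z‖ ^ κ := by
    funext z
    rw [upow, Complex.norm_cpow_real]
  rw [this]
  exact (tendsto_rpow_atTop h0).comp tendsto_norm_cobounded_atTop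

theorem quo_tendsto {κ : ℝ} (h0 : 0 < κ) : Filter.Tendsto (quo κ)
    (Bornology.cobounded ℂ ⊓ Filter.principal {z | 0 < z.re}) (nhds 1) := by
  have h : Filter.Tendsto (fun ω => cay (upow κ ω) / cay ω)
      (Bornology.cobounded ℂ ⊓ Filter.principal {z | 0 < z.re}) (nhds (1 / 1)) :=
    ((cay_tendsto.comp (upow_tendsto h0)).div cay_tendsto one_ne_zero).mono_left inf_le_left
  rw [div_one] at h
  refine h.congr' ?_
  have e1 : ∀ᶠ ω in Bornology.cobounded ℂ ⊓ Filter.principal {z : ℂ | 0 < z.re}, ω ≠ 1 :=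
    (Bornology.eventually_ne_cobounded (1 : ℂ)).filter_mono inf_le_left
  have e2 : ∀ᶠ ω in Bornology.cobounded ℂ ⊓ Filter.principal {z : ℂ | 0 < z.re}, 0 < ω.re :=
    (Filter.eventually_principal.2 (fun x hx => hx)).filter_mono inf_le_right
  filter_upwards [e1, e2] with ω a b
  exact (quo_of_ne b.le a).symm

section PL
variable {E : Type*} [NormedAddCommGroup E] [NormedSpace ℂ E]

theorem PL_gen {κ : ℝ} (h0 : 0 < κ) (h2 : κ < 2) {P : ℂ → E} (hP : Differentiable ℂ P)
    {Y : ℂ → ℂ} (hY1 : DifferentiableOn ℂ Y {z | 0 < z.re}) (hY2 : ContinuousOn Y {z | 0 ≤ z.re})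
    (hY3 : Filter.Tendsto Y (Bornology.cobounded ℂ ⊓ Filter.principal {z | 0 < z.re}) (nhds 1))
    {C : ℝ} (hC : ∀ x : ℝ, ‖Y (x * Complex.I) • P (cay (upow κ (x * Complex.I)))‖ ≤ C)
    {ω : ℂ} (hω : 0 ≤ ω.re) : ‖Y ω • P (cay (upow κ ω))‖ ≤ C := by
  have hlim : Filter.Tendsto (fun ω => Y ω • P (cay (upow κ ω)))
      (Bornology.cobounded ℂ ⊓ Filter.principal {z | 0 < z.re}) (nhds ((1 : ℂ) • P 1)) := by
    refine hY3.smul ?_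
    exact (((hP.continuous.tendsto 1).comp cay_tendsto).comp (upow_tendsto h0)).mono_left inf_le_left
  refine PhragmenLindelof.right_half_plane_of_bounded_on_real
    (f := fun ω => Y ω • P (cay (upow κ ω))) (dcl ?_ ?_) ?_ ?_ hC hω
  · refine hY1.smul (hP.comp_differentiableOn ?_)
    exact DifferentiableOn.div ((upow_diffOn κ).sub_const _) ((upow_diffOn κ).add_const _)
      (fun z hz => cpow_add_one_ne h0 h2 (le_of_lt hz))
  · refine hY2.smul (hP.continuous.comp_continuousOn ?_)
    exact ContinuousOn.div ((upow_contOn h0).sub continuousOn_const)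
      ((upow_contOn h0).add continuousOn_const) (fun z hz => cpow_add_one_ne h0 h2 hz)
  · refine ⟨0, by norm_num, 0, ?_⟩
    have := hlim.isBigO_one ℝ
    simpa using this
  · have hr : Filter.Tendsto (fun x : ℝ => (x : ℂ)) Filter.atTop
        (Bornology.cobounded ℂ ⊓ Filter.principal {z | 0 < z.re}) := by
      rw [Filter.tendsto_inf, Filter.tendsto_principal]
      constructor
      · rw [← tendsto_norm_atTop_iff_cobounded]
        simpa using Filter.tendsto_abs_atTop_atTop
      · filter_upwards [Filter.eventually_gt_atTop (0 : ℝ)] with x hx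
        simpa using hx
    exact (hlim.comp hr).norm.isBoundedUnder_le

theorem re_mul_I (x : ℝ) : 0 ≤ ((x : ℂ) * Complex.I).re := by simp

theorem mul_I_ne_one (x : ℝ) : (x : ℂ) * Complex.I ≠ 1 := by
  intro h
  have := congrArg Complex.re h
  simp at this

theorem cay_mul_I (x : ℝ) : ‖cay ((x : ℂ) * Complex.I)‖ = 1 := by
  have h := cay_norm_sq (add_one_ne (re_mul_I x))
  have e : ((x : ℂ) * Complex.I).re = 0 := by simp
  have ne : ‖(x : ℂ) * Complex.I + 1‖ ^ 2 ≠ 0 := by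
    have := norm_ne_zero_iff.2 (add_one_ne (re_mul_I x))
    positivity
  rw [e, mul_zero] at h
  have h2 := (mul_eq_zero.1 h).resolve_right ne
  nlinarith [norm_nonneg (cay ((x : ℂ) * Complex.I))]

theorem PL_A {κ : ℝ} (h0 : 0 < κ) (h2 : κ < 2) {P : ℂ → E} (hP : Differentiable ℂ P) (d : ℕ)
    {C : ℝ} (hC : ∀ x : ℝ, ‖cay (upow κ (x * Complex.I))‖ ^ d *
      ‖P (cay (upow κ (x * Complex.I)))‖ ≤ C)
    {ω : ℂ} (hω : 0 ≤ ω.re) (h1 : ω ≠ 1) :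
    ‖cay (upow κ ω)‖ ^ d * ‖P (cay (upow κ ω))‖ ≤ ‖cay ω‖ ^ d * C := by
  have := PL_gen h0 h2 hP (Y := fun ω => quo κ ω ^ d) (C := C) ((quo_diffOn h0 h2).pow d)
    ((quo_contOn h0 h2).pow d) (by simpa using (quo_tendsto h0).pow d) (by
      intro x
      rw [norm_smul, norm_pow, quo_of_ne (re_mul_I x) (mul_I_ne_one x), norm_div, cay_mul_I, div_one]
      exact hC x) hω
  rw [norm_smul, norm_pow, quo_of_ne hω h1, norm_div, div_pow] at this
  have ne : 0 < ‖cay ω‖ := norm_pos_iff.2 (div_ne_zero (sub_ne_zero.2 h1) (add_one_ne hω))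
  rw [div_mul_eq_mul_div, div_le_iff₀ (by positivity)] at this
  linarith

theorem PL_B {κ : ℝ} (h0 : 0 < κ) (h2 : κ < 2) {P : ℂ → E} (hP : Differentiable ℂ P) (d : ℕ)
    {C : ℝ} (hC : ∀ x : ℝ, ‖P (cay (upow κ (x * Complex.I)))‖ ≤
      ‖cay (upow κ (x * Complex.I))‖ ^ d * C)
    {ω : ℂ} (hω : 0 ≤ ω.re) (h1 : ω ≠ 1) :
    ‖cay ω‖ ^ d * ‖P (cay (upow κ ω))‖ ≤ ‖cay (upow κ ω)‖ ^ d * C := by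
  have cne : ∀ ω : ℂ, 0 ≤ ω.re → ω ≠ 1 → 0 < ‖cay (upow κ ω)‖ := fun ω hω h1 =>
    norm_pos_iff.2 (div_ne_zero (sub_ne_zero.2 (cpow_ne_one h0 h2 hω h1)) (cpow_add_one_ne h0 h2 hω))
  have := PL_gen h0 h2 hP (Y := fun ω => ((quo κ ω)⁻¹) ^ d) (C := C)
    (((quo_diffOn h0 h2).inv (fun z hz => quo_ne h0 h2 (le_of_lt hz))).pow d)
    (((quo_contOn h0 h2).inv₀ (fun z hz => quo_ne h0 h2 hz)).pow d)
    (by simpa using ((quo_tendsto h0).inv₀ one_ne_zero).pow d) (by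
      intro x
      rw [norm_smul, norm_pow, quo_of_ne (re_mul_I x) (mul_I_ne_one x), norm_inv, norm_div,
        cay_mul_I, div_one, inv_pow, inv_mul_le_iff₀ (by
          have := cne _ (re_mul_I x) (mul_I_ne_one x)
          positivity)]
      exact hC x) hω
  rw [norm_smul, norm_pow, quo_of_ne hω h1, norm_inv, norm_div, inv_div, div_pow] at this
  have ne := cne ω hω h1
  rw [div_mul_eq_mul_div, div_le_iff₀ (by positivity)] at this
  linarith

end PL

theorem upow_re (κ : ℝ) (h0 : 0 < κ) (x : ℝ) :
    (upow κ (x * Complex.I)).re = ‖upow κ (x * Complex.I)‖ * Real.cos (κ * (Real.pi / 2)) := by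
  have hk : (κ : ℂ) ≠ 0 := by exact_mod_cast h0.ne'
  rcases eq_or_ne x 0 with rfl | hx
  · simp [upow, Complex.zero_cpow hk]
  have hne : (x : ℂ) * Complex.I ≠ 0 := by simp [hx]
  rw [upow, Complex.cpow_def_of_ne_zero hne, Complex.exp_re, Complex.norm_exp]
  congr 1
  have e : (Complex.log (x * Complex.I) * κ).im = ((x : ℂ) * Complex.I).arg * κ := by
    simp [Complex.log_im]
  rw [e]
  rcases lt_or_gt_of_ne hx with h | h
  · have : ((x : ℂ) * Complex.I).arg = -(Real.pi / 2) := by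
      rw [Complex.arg_eq_neg_pi_div_two_iff]; simp [h]
    rw [this, ← Real.cos_neg]
    congr 1; ring
  · have : ((x : ℂ) * Complex.I).arg = Real.pi / 2 := by
      rw [Complex.arg_eq_pi_div_two_iff]; simp [h]
    rw [this, mul_comm]

theorem lens_eq {κ : ℝ} (h0 : 0 < κ) (h2 : κ < 2) (x : ℝ) :
    Real.cos (κ * (Real.pi / 2)) * ‖1 - cay (upow κ (x * Complex.I)) ^ 2‖ =
      1 - ‖cay (upow κ (x * Complex.I))‖ ^ 2 := by
  have b : upow κ (x * Complex.I) + 1 ≠ 0 := cpow_add_one_ne h0 h2 (re_mul_I x)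
  have a1 := cay_norm_sq b
  have a2 := cay_one_sub_sq b
  have a3 := upow_re κ h0 x
  have ne : ‖upow κ (x * Complex.I) + 1‖ ^ 2 ≠ 0 := by
    have := norm_ne_zero_iff.2 b
    positivity
  apply mul_right_cancel₀ ne
  rw [a1, a3, mul_assoc, a2]
  ring

section Final

variable {n : ℕ}

/-- The function with Walsh coefficients `c A`, damped by `z ^ (e A)`, as an element of `ℓ_p`. -/
def Pv (q : ℝ≥0∞) (c : Finset (Fin n) → ℂ) (e : Finset (Fin n) → ℕ) (z : ℂ) :
    PiLp q (fun _ : Fin n → Bool => ℂ) :=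
  ∑ A : Finset (Fin n), z ^ (e A) • WithLp.toLp q (fun ε : Fin n → Bool => (walsh A ε : ℂ) * c A)

theorem Pv_apply (q : ℝ≥0∞) (c : Finset (Fin n) → ℂ) (e : Finset (Fin n) → ℕ) (z : ℂ) :
    Pv q c e z = WithLp.toLp q
      (fun ε => ∑ A : Finset (Fin n), z ^ (e A) * ((walsh A ε : ℂ) * c A)) := by
  ext ε
  simp [Pv]

theorem Pv_diff (q : ℝ≥0∞) [Fact (1 ≤ q)] (c : Finset (Fin n) → ℂ) (e : Finset (Fin n) → ℕ) :
    Differentiable ℂ (Pv q c e) := by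
  unfold Pv
  apply Differentiable.fun_sum
  intro A _
  exact (differentiable_id.pow (e A)).smul_const _

theorem lpNorm_eq {p : ℝ} (hp : 1 < p) (f : (Fin n → Bool) → ℂ) :
    lpNorm p f = ((2 ^ n : ℝ)⁻¹) ^ (1 / p) * ‖WithLp.toLp (ENNReal.ofReal p) f‖ := by
  have e : (ENNReal.ofReal p).toReal = p := ENNReal.toReal_ofReal (by linarith)
  rw [PiLp.norm_eq_sum (by rw [e]; linarith), e, lpNorm, Real.mul_rpow (by positivity)
    (Finset.sum_nonneg fun i _ => Real.rpow_nonneg (norm_nonneg _) _)]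

theorem toLp_le {p : ℝ} (hp : 1 < p) (f g : (Fin n → Bool) → ℂ)
    (h : ∑ ε, ‖f ε‖ ^ p ≤ ∑ ε, ‖g ε‖ ^ p) :
    ‖WithLp.toLp (ENNReal.ofReal p) f‖ ≤ ‖WithLp.toLp (ENNReal.ofReal p) g‖ := by
  have e : (ENNReal.ofReal p).toReal = p := ENNReal.toReal_ofReal (by linarith)
  rw [PiLp.norm_eq_sum (by rw [e]; linarith), PiLp.norm_eq_sum (by rw [e]; linarith), e]
  exact Real.rpow_le_rpow (Finset.sum_nonneg fun i _ => Real.rpow_nonneg (norm_nonneg _) _) h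
    (by positivity)

theorem heat_eq (t : ℝ) (f : (Fin n → Bool) → ℂ) (ε : Fin n → Bool) :
    heat t f ε = ∑ A : Finset (Fin n), (walsh A ε : ℂ) * ((Real.exp (-t) : ℂ) ^ A.card * coeff f A) := by
  unfold heat
  apply Finset.sum_congr rfl
  intro A _
  have : Real.exp (-t * A.card) = Real.exp (-t) ^ A.card := by
    rw [← Real.exp_nat_mul]; ring_nf
  rw [this]
  simp only [Complex.real_smul]
  push_cast
  ring

theorem heat_eq_Tz (t : ℝ) (f : (Fin n → Bool) → ℂ) :
    heat t f = Tz (Real.exp (-t) : ℂ) (coeff f) := by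
  funext ε
  rw [heat_eq, Tz]
  apply Finset.sum_congr rfl
  intro A _
  ring

theorem theta_facts {p θ : ℝ} (hp : 1 < p) (hθ : θ = 2 * Real.arcsin (2 * Real.sqrt (p - 1) / p)) :
    0 < θ ∧ θ ≤ Real.pi ∧ Real.cos (θ / 2) = |p - 2| / p := by
  have hs : 0 < 2 * Real.sqrt (p - 1) / p := by
    have := Real.sqrt_pos.2 (show 0 < p - 1 by linarith)
    positivity
  refine ⟨?_, ?_, ?_⟩
  · rw [hθ]
    have := Real.arcsin_pos.2 hs
    linarith
  · rw [hθ]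
    have := Real.arcsin_le_pi_div_two (2 * Real.sqrt (p - 1) / p)
    linarith
  · rw [hθ, mul_div_cancel_left₀ _ two_ne_zero, Real.cos_arcsin]
    have : 1 - (2 * Real.sqrt (p - 1) / p) ^ 2 = ((p - 2) / p) ^ 2 := by
      have h1 := Real.sq_sqrt (show 0 ≤ p - 1 by linarith)
      have hp0 : p ≠ 0 := by linarith
      rw [div_pow, mul_pow, h1]
      field_simp
      ring
    rw [this, Real.sqrt_sq_eq_abs, abs_div, abs_of_pos (show 0 < p by linarith)]

/-- Evaluation of the conformal maps at the real point. -/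
theorem real_pt {κ s : ℝ} (h0 : 0 < κ) (hs0 : 0 < s) (hs1 : s < 1) :
    ∃ r : ℝ, 1 < r ∧ cay (upow κ r) = s ∧
      ‖cay r‖ = ((1 + s) ^ (1 / κ) - (1 - s) ^ (1 / κ)) / ((1 + s) ^ (1 / κ) + (1 - s) ^ (1 / κ)) := by
  have hb : 0 < 1 - s := by linarith
  have ha : 0 < 1 + s := by linarith
  have hu : 1 < (1 + s) / (1 - s) := by rw [lt_div_iff₀ hb]; linarith
  have hr : 1 < ((1 + s) / (1 - s)) ^ (1 / κ) := Real.one_lt_rpow hu (by positivity)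
  refine ⟨((1 + s) / (1 - s)) ^ (1 / κ), hr, ?_, ?_⟩
  · rw [upow, ← Complex.ofReal_cpow (by positivity), ← Real.rpow_mul (by positivity),
      one_div_mul_cancel h0.ne', Real.rpow_one, cay]
    have : (((1 + s) / (1 - s) : ℝ) : ℂ) - 1 = (((1 + s) / (1 - s) - 1 : ℝ) : ℂ) := by push_cast; ring
    rw [this]
    have : (((1 + s) / (1 - s) : ℝ) : ℂ) + 1 = (((1 + s) / (1 - s) + 1 : ℝ) : ℂ) := by push_cast; ring
    rw [this, ← Complex.ofReal_div]
    congr 1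
    have : (1 + s) / (1 - s) + 1 = 2 / (1 - s) := by field_simp; ring
    rw [this]
    field_simp
    ring
  · set r := ((1 + s) / (1 - s)) ^ (1 / κ) with hrdef
    have e : cay (r : ℂ) = (((r - 1) / (r + 1) : ℝ) : ℂ) := by rw [cay]; push_cast; ring
    rw [e, Complex.norm_real, Real.norm_of_nonneg (div_nonneg (by linarith) (by linarith))]
    rw [Real.div_rpow ha.le hb.le] at hrdef
    have pa := Real.rpow_pos_of_pos ha (1 / κ)
    have pb := Real.rpow_pos_of_pos hb (1 / κ)
    rw [hrdef]
    field_simp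

theorem part_two (p : ℝ) (hp : 1 < p) (θ : ℝ)
    (hθ : θ = 2 * Real.arcsin (2 * Real.sqrt (p - 1) / p)) (d : ℕ)
    (f : (Fin n → Bool) → ℂ) (hf : tailSpace f d) (t : ℝ) (ht : 0 ≤ t) :
    lpNorm p (heat t f) ≤
        (((1 + Real.exp (-t)) ^ (Real.pi / θ) - (1 - Real.exp (-t)) ^ (Real.pi / θ)) /
          ((1 + Real.exp (-t)) ^ (Real.pi / θ) + (1 - Real.exp (-t)) ^ (Real.pi / θ))) ^ d *
          lpNorm p f := by
  obtain ⟨t0, t1, t2⟩ := theta_facts hp hθ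
  have pi0 := Real.pi_pos
  have hf0 : ∀ ε, ∑ A : Finset (Fin n), (walsh A ε : ℂ) * coeff f A = f ε := inversion f
  rcases ht.eq_or_lt with rfl | ht
  · have h1 : heat 0 f = f := by
      funext ε
      rw [heat_eq, ← hf0 ε]
      simp
    have h2 : (0 : ℝ) ^ (Real.pi / θ) = 0 := Real.zero_rpow (by positivity)
    rw [h1, neg_zero, Real.exp_zero, sub_self, h2, sub_zero, add_zero, div_self, one_pow, one_mul]
    have : (0 : ℝ) < (1 + 1) ^ (Real.pi / θ) := by positivity
    exact this.ne'
  have hκ : 0 < θ / Real.pi := by positivity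
  have hκ2 : θ / Real.pi < 2 := by rw [div_lt_iff₀ pi0]; linarith
  have hs1 : Real.exp (-t) < 1 := by rw [Real.exp_lt_one_iff]; linarith
  obtain ⟨r, hr1, hr2, hr3⟩ := real_pt hκ (Real.exp_pos (-t)) hs1
  rw [one_div_div] at hr3
  haveI : Fact (1 ≤ ENNReal.ofReal p) := ⟨by
    rw [← ENNReal.ofReal_one]; exact ENNReal.ofReal_le_ofReal hp.le⟩
  have hz : ∀ z : ℂ, z ^ d • Pv (ENNReal.ofReal p) (coeff f) (fun A => A.card - d) z =
      WithLp.toLp (ENNReal.ofReal p) (Tz z (coeff f)) := by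
    intro z
    rw [Pv_apply]
    ext ε
    simp only [PiLp.smul_apply, smul_eq_mul, Tz, Finset.mul_sum]
    apply Finset.sum_congr rfl
    intro A _
    rcases lt_or_ge A.card d with h | h
    · rw [hf A h]; simp
    · rw [← mul_assoc, ← pow_add, Nat.add_sub_cancel' h]
  have hC : ∀ x : ℝ, ‖cay (upow (θ / Real.pi) (x * Complex.I))‖ ^ d *
      ‖Pv (ENNReal.ofReal p) (coeff f) (fun A => A.card - d)
        (cay (upow (θ / Real.pi) (x * Complex.I)))‖ ≤ ‖WithLp.toLp (ENNReal.ofReal p) f‖ := by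
    intro x
    rw [← norm_pow, ← norm_smul, hz]
    apply toLp_le hp
    have hl := lens_eq hκ hκ2 x
    rw [show θ / Real.pi * (Real.pi / 2) = θ / 2 by field_simp, t2] at hl
    have := Tz_contr hp hl.le (coeff f)
    simpa only [hf0] using this
  have fin := PL_A hκ hκ2 (Pv_diff (ENNReal.ofReal p) (coeff f) (fun A => A.card - d)) d hC
    (ω := r) (by simp; linarith) (by
      intro h
      have : r = 1 := by exact_mod_cast h
      linarith)
  rw [hr2, ← norm_pow, ← norm_smul, hz, hr3, ← heat_eq_Tz] at fin
  rw [lpNorm_eq hp, lpNorm_eq hp]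
  have hpos : 0 ≤ ((2 ^ n : ℝ)⁻¹) ^ (1 / p) := by positivity
  have := mul_le_mul_of_nonneg_left fin hpos
  linarith

theorem part_one (p : ℝ) (hp : 1 < p) (θ : ℝ)
    (hθ : θ = 2 * Real.arcsin (2 * Real.sqrt (p - 1) / p)) (d : ℕ)
    (f : (Fin n → Bool) → ℂ) (hf : degLE f d) (t : ℝ) (ht : 0 ≤ t) :
      (((Real.exp t + 1) ^ (Real.pi / (2 * Real.pi - θ)) -
          (Real.exp t - 1) ^ (Real.pi / (2 * Real.pi - θ))) /
        ((Real.exp t + 1) ^ (Real.pi / (2 * Real.pi - θ)) +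
          (Real.exp t - 1) ^ (Real.pi / (2 * Real.pi - θ)))) ^ d * lpNorm p f ≤
        lpNorm p (heat t f) := by
  obtain ⟨t0, t1, t2⟩ := theta_facts hp hθ
  have pi0 := Real.pi_pos
  have hf0 : ∀ ε, ∑ A : Finset (Fin n), (walsh A ε : ℂ) * coeff f A = f ε := inversion f
  have h2π : 0 < 2 * Real.pi - θ := by linarith
  rcases ht.eq_or_lt with rfl | ht
  · have h1 : heat 0 f = f := by
      funext ε
      rw [heat_eq, ← hf0 ε]
      simp
    have h2 : (0 : ℝ) ^ (Real.pi / (2 * Real.pi - θ)) = 0 := Real.zero_rpow (by positivity)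
    rw [h1, Real.exp_zero, sub_self, h2, sub_zero, add_zero, div_self, one_pow, one_mul]
    have : (0 : ℝ) < (1 + 1) ^ (Real.pi / (2 * Real.pi - θ)) := by positivity
    exact this.ne'
  set κ := (2 * Real.pi - θ) / Real.pi with hκdef
  have hκ : 0 < κ := by positivity
  have hκ2 : κ < 2 := by rw [hκdef, div_lt_iff₀ pi0]; linarith
  have hs0 := Real.exp_pos (-t)
  have hs1 : Real.exp (-t) < 1 := by rw [Real.exp_lt_one_iff]; linarith
  obtain ⟨r, hr1, hr2, hr3⟩ := real_pt hκ hs0 hs1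
  have hk1 : 1 / κ = Real.pi / (2 * Real.pi - θ) := by rw [hκdef, one_div_div]
  rw [hk1] at hr3
  set a := Real.pi / (2 * Real.pi - θ) with ha
  have hratio : ((Real.exp t + 1) ^ a - (Real.exp t - 1) ^ a) /
      ((Real.exp t + 1) ^ a + (Real.exp t - 1) ^ a) = ‖cay (r : ℂ)‖ := by
    rw [hr3]
    have het : Real.exp t * Real.exp (-t) = 1 := by rw [← Real.exp_add]; simp
    have e1 : Real.exp t + 1 = Real.exp t * (1 + Real.exp (-t)) := by linarith
    have e2 : Real.exp t - 1 = Real.exp t * (1 - Real.exp (-t)) := by linarith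
    rw [e1, e2, Real.mul_rpow (Real.exp_pos t).le (by linarith),
      Real.mul_rpow (Real.exp_pos t).le (by linarith), ← mul_sub, ← mul_add, mul_div_mul_left]
    exact (Real.rpow_pos_of_pos (Real.exp_pos t) a).ne'
  rw [hratio]
  haveI : Fact (1 ≤ ENNReal.ofReal p) := ⟨by
    rw [← ENNReal.ofReal_one]; exact ENNReal.ofReal_le_ofReal hp.le⟩
  set c : Finset (Fin n) → ℂ := fun A => (Real.exp (-t) : ℂ) ^ A.card * coeff f A with hc
  have hz : ∀ z : ℂ, z ≠ 0 → Pv (ENNReal.ofReal p) c (fun A => d - A.card) z =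
      z ^ d • WithLp.toLp (ENNReal.ofReal p) (Tz z⁻¹ c) := by
    intro z hz0
    rw [Pv_apply]
    ext ε
    simp only [PiLp.smul_apply, smul_eq_mul, Tz, Finset.mul_sum]
    apply Finset.sum_congr rfl
    intro A _
    rcases lt_or_ge d A.card with h | h
    · simp [hc, hf A h]
    · rw [← mul_assoc, pow_sub₀ z hz0 h, inv_pow]
      ring
  have hheat : heat t f = fun ε => ∑ A : Finset (Fin n), (walsh A ε : ℂ) * c A := by
    funext ε
    rw [heat_eq]
  have hC : ∀ x : ℝ, ‖Pv (ENNReal.ofReal p) c (fun A => d - A.card)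
        (cay (upow κ (x * Complex.I)))‖ ≤ ‖cay (upow κ (x * Complex.I))‖ ^ d *
          ‖WithLp.toLp (ENNReal.ofReal p) (heat t f)‖ := by
    intro x
    have hl := lens_eq hκ hκ2 x
    rw [show κ * (Real.pi / 2) = Real.pi - θ / 2 by rw [hκdef]; field_simp, Real.cos_pi_sub, t2] at hl
    set ζ := cay (upow κ (x * Complex.I)) with hζ
    have hζ0 : ζ ≠ 0 := by
      intro h
      rw [h] at hl
      have : 0 ≤ |p - 2| / p := by positivity
      norm_num at hl
      linarith
    rw [hz ζ hζ0, norm_smul, norm_pow]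
    apply mul_le_mul_of_nonneg_left _ (by positivity)
    apply toLp_le hp
    rw [hheat]
    apply Tz_contr hp
    have e1 : 1 - ζ⁻¹ ^ 2 = -((1 - ζ ^ 2) * ζ⁻¹ ^ 2) := by field_simp; ring
    have hn : 0 < ‖ζ‖ := norm_pos_iff.2 hζ0
    rw [e1, norm_neg, norm_mul, norm_pow, norm_inv, ← mul_assoc]
    have : |p - 2| / p * ‖1 - ζ ^ 2‖ = ‖ζ‖ ^ 2 - 1 := by linarith
    rw [this]
    apply le_of_eq
    field_simp
  have fin := PL_B hκ hκ2 (Pv_diff (ENNReal.ofReal p) c (fun A => d - A.card)) d hC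
    (ω := r) (by simp; linarith) (by
      intro h
      have : r = 1 := by exact_mod_cast h
      linarith)
  have hTf : Tz (Real.exp (-t) : ℂ)⁻¹ c = f := by
    funext ε
    rw [← hf0 ε, Tz]
    apply Finset.sum_congr rfl
    intro A _
    have : (Real.exp (-t) : ℂ) ≠ 0 := by exact_mod_cast hs0.ne'
    simp only [hc, inv_pow]
    field_simp
  rw [hr2, hz _ (by exact_mod_cast hs0.ne'), hTf, norm_smul, norm_pow] at fin
  have hE : 0 < ‖(Real.exp (-t) : ℂ)‖ ^ d := by
    have : 0 < ‖(Real.exp (-t) : ℂ)‖ := norm_pos_iff.2 (by exact_mod_cast hs0.ne')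
    positivity
  rw [mul_left_comm] at fin
  have fin2 := le_of_mul_le_mul_left fin hE
  rw [lpNorm_eq hp, lpNorm_eq hp]
  have hpos : 0 ≤ ((2 ^ n : ℝ)⁻¹) ^ (1 / p) := by positivity
  have := mul_le_mul_of_nonneg_left fin2 hpos
  linarith

end Final

/-- **Sharp scalar bounds on the decay of the heat semigroup.** -/
theorem stmt10 (p : ℝ) (hp : 1 < p) (θ : ℝ)
    (hθ : θ = 2 * Real.arcsin (2 * Real.sqrt (p - 1) / p))
    (n d : ℕ) (hdn : d ≤ n) :
    (∀ f : (Fin n → Bool) → ℂ, degLE f d → ∀ t : ℝ, 0 ≤ t →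
      (((Real.exp t + 1) ^ (Real.pi / (2 * Real.pi - θ)) -
          (Real.exp t - 1) ^ (Real.pi / (2 * Real.pi - θ))) /
        ((Real.exp t + 1) ^ (Real.pi / (2 * Real.pi - θ)) +
          (Real.exp t - 1) ^ (Real.pi / (2 * Real.pi - θ)))) ^ d * lpNorm p f ≤
        lpNorm p (heat t f)) ∧
    (∀ f : (Fin n → Bool) → ℂ, tailSpace f d → ∀ t : ℝ, 0 ≤ t →
      lpNorm p (heat t f) ≤
        (((1 + Real.exp (-t)) ^ (Real.pi / θ) - (1 - Real.exp (-t)) ^ (Real.pi / θ)) /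
          ((1 + Real.exp (-t)) ^ (Real.pi / θ) + (1 - Real.exp (-t)) ^ (Real.pi / θ))) ^ d *
          lpNorm p f) := by
  exact ⟨fun f hf t ht => part_one p hp θ hθ d f hf t ht,
    fun f hf t ht => part_two p hp θ hθ d f hf t ht⟩

end HammingCube
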